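/- Let w_e > 0 and let σ̂_{e,h} : ℝᵈ → ℝᵈ (e = 1,…,m; h ∈ ℕ) be continuous functions. Let B_e : ℝⁿ → ℝᵈ be linear maps and f ∈ ℝⁿ. Assume: (i) uniform material stability: there exist a > 0, b ≥ 0 independent of h with σ̂_{e,h}(ε)·ε ≥ a‖ε‖_e² − b for all ε; (ii) structural stability: there is c > 0 with ‖u‖² ≤ c Σ_e w_e‖B_e u‖_e² for all u ∈ ℝⁿ; (iii) for each e, σ̂_{e,h} converges as h → ∞ to a function σ̂_e uniformly on compact subsets of ℝᵈ. Then for each h the approximating problem Σ_e w_e σ̂_{e,h}(B_e u_h)·(B_e v) = f·v for all v has a solution u_h*, and a subsequence of (u_h*) converges to a point u* which solves the limiting problem Σ_e w_e σ̂_e(B_e u*)·(B_e v) = f·v for all v. -/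

import Mathlib

open Matrix Filter Topology

/-!
A continuous field `F` on a finite-dimensional space with `⟪F x, x⟫ > 0` far out has a zero, by the
Milnor–Rogers argument. If `r` is `C¹` and equals the identity on the boundary of a compact convex
set, then `∫ det (1 + t (Dr - 1))` is a polynomial in `t`; for small `t ≥ 0` the map
`x + t (r x - x)` is a bijection of the set, so the polynomial equals the volume there, hence also
at `t = 1`. Thus `r` is not valued in a sphere, since that would force `det Dr = 0`; normalizing a
smooth nowhere-zero perturbation of `F`, cut off to the identity, would produce such an `r`.

Material and structural stability make the internal virtual work `A_h u u` grow like `‖u‖²`,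
uniformly in `h`. So each `A_h - f` has a zero, all these zeros lie in a common compact set, and
locally uniform convergence of `A_h` carries the equation to limits of subsequences.
-/

open MeasureTheory Set Metric Polynomial
open scoped NNReal

theorem inter_frontier_nonempty_of_isPreconnected {X : Type*} [TopologicalSpace X] {s t : Set X}
    (ht : IsPreconnected t) (hts : (t ∩ s).Nonempty) (htsc : (t ∩ sᶜ).Nonempty) :
    (t ∩ frontier s).Nonempty := by
  by_contra! hempty
  have hcover : t ⊆ interior s ∪ interior sᶜ := by
    rw [interior_compl, ← sdiff_eq_empty, sdiff_eq, compl_union, compl_compl,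
      inter_comm _ (closure s)]
    exact hempty
  obtain ⟨x, hxt, hxs⟩ := hts
  obtain ⟨y, hyt, hys⟩ := htsc
  have hx : x ∈ interior s := (hcover hxt).resolve_right fun h ↦ interior_subset h hxs
  exact hys <| interior_subset <| ht.subset_left_of_subset_union isOpen_interior isOpen_interior
    (disjoint_compl_right.mono interior_subset interior_subset) hcover ⟨x, hxt, hx⟩ hyt

theorem lipschitzWith_indicator {E F : Type*} [NormedAddCommGroup E] [NormedSpace ℝ E]
    [SeminormedAddCommGroup F] {f : E → F} {s : Set E} {K : ℝ≥0} (hs : IsClosed s)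
    (hf : LipschitzOnWith K f s) (hzero : ∀ x ∈ frontier s, f x = 0) :
    LipschitzWith K (s.indicator f) := by
  have crossing : ∀ x ∈ s, ∀ y ∉ s, dist (f x) 0 ≤ K * dist x y := by
    intro x hx y hy
    obtain ⟨z, hz, hzs⟩ := inter_frontier_nonempty_of_isPreconnected
      (convex_segment (𝕜 := ℝ) x y).isPreconnected ⟨x, left_mem_segment ℝ x y, hx⟩
      ⟨y, right_mem_segment ℝ x y, hy⟩
    calc dist (f x) 0 = dist (f x) (f z) := by rw [hzero z hzs]
      _ ≤ K * dist x z := hf.dist_le_mul x hx z (hs.frontier_subset hzs)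
      _ ≤ K * dist x y := by
        gcongr
        linarith [dist_add_dist_of_mem_segment hz, dist_nonneg (x := z) (y := y)]
  refine LipschitzWith.of_dist_le_mul fun x y ↦ ?_
  by_cases hx : x ∈ s <;> by_cases hy : y ∈ s
  · simpa only [indicator_of_mem, hx, hy] using hf.dist_le_mul x hx y hy
  · simpa only [indicator_of_mem hx, indicator_of_notMem hy] using crossing x hx y hy
  · simpa only [indicator_of_notMem hx, indicator_of_mem hy, dist_comm] using crossing y hy x hx
  · simp only [indicator_of_notMem hx, indicator_of_notMem hy, dist_self]
    positivity

theorem bijective_add_of_lipschitzWith {E : Type*} [NormedAddCommGroup E] [NormedSpace ℝ E]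
    [CompleteSpace E] {h : E → E} {K : ℝ≥0} (hh : LipschitzWith K h) (hK : K < 1) :
    Function.Bijective fun x ↦ x + h x := by
  have happrox : ApproximatesLinearOn (fun x ↦ x + h x)
      (ContinuousLinearEquiv.refl ℝ E : E →L[ℝ] E) univ K := fun x _ y _ ↦ by
    simpa [dist_eq_norm, add_sub_add_comm] using hh.dist_le_mul x y
  have hsmall : Subsingleton E ∨
      K < ‖((ContinuousLinearEquiv.refl ℝ E).symm : E →L[ℝ] E)‖₊⁻¹ := by
    rcases subsingleton_or_nontrivial E with hE | hE
    · exact .inl hE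
    · right; simpa using hK
  exact ⟨injOn_univ.1 (happrox.injOn hsmall), happrox.surjective hsmall⟩

theorem image_eq_of_bijective_of_eqOn_compl {α : Type*} {g : α → α} {s : Set α}
    (hg : Function.Bijective g) (hid : EqOn g id sᶜ) : g '' s = s := by
  have := image_compl_eq (s := sᶜ) hg
  rwa [compl_compl, hid.image_eq, image_id, compl_compl] at this

theorem exists_polynomial_eval_eq_det_one_add_smul {R M : Type*} [CommRing R] [AddCommGroup M]
    [Module R M] [Module.Free R M] [Module.Finite R M] (A : M →ₗ[R] M) :
    ∃ p : R[X], p.natDegree ≤ Module.finrank R M ∧ ∀ t, p.eval t = LinearMap.det (1 + t • A) := by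
  nontriviality R
  classical
  let basis := Module.Free.chooseBasis R M
  let N := LinearMap.toMatrix basis basis A
  refine ⟨det ((X : R[X]) • N.map C + (1 : Matrix _ _ R).map C), ?_, fun t ↦ ?_⟩
  · simpa only [Module.finrank_eq_card_chooseBasisIndex] using natDegree_det_X_add_C_le N 1
  · have hN : (1 : Matrix _ _ R) + t • N = LinearMap.toMatrix basis basis (1 + t • A) := by
      simp [N, LinearMap.toMatrix_one]
    rw [← LinearMap.det_toMatrix basis, ← hN, ← coe_evalRingHom, RingHom.map_det]
    congr 1
    ext i j
    by_cases hij : i = j <;> simp [hij, add_comm, mul_comm t]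

theorem exists_polynomial_eval_eq_integral {Ω : Type*} [MeasurableSpace Ω] {μ : Measure Ω}
    {p : Ω → ℝ[X]} {N : ℕ} (hdeg : ∀ x, (p x).natDegree ≤ N)
    (hint : ∀ t, Integrable (fun x ↦ (p x).eval t) μ) :
    ∃ q : ℝ[X], ∀ t, q.eval t = ∫ x, (p x).eval t ∂μ := by
  let nodes := Finset.range (N + 1)
  have hinj : InjOn (Nat.cast : ℕ → ℝ) nodes := Nat.cast_injective.injOn
  have heval : ∀ (r : ℕ → ℝ) (t : ℝ), (Lagrange.interpolate nodes Nat.cast r).eval t =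
      ∑ j ∈ nodes, r j * (Lagrange.basis nodes Nat.cast j).eval t := fun r t ↦ by
    simp [Lagrange.interpolate_apply, eval_finsetSum]
  have hinterp : ∀ x, p x = Lagrange.interpolate nodes Nat.cast fun j ↦ (p x).eval (j : ℝ) :=
    fun x ↦ Lagrange.eq_interpolate hinj <| by
      rw [Finset.card_range]
      exact degree_le_natDegree.trans_lt (by exact_mod_cast Nat.lt_succ_of_le (hdeg x))
  refine ⟨Lagrange.interpolate nodes Nat.cast fun j ↦ ∫ x, (p x).eval (j : ℝ) ∂μ, fun t ↦ ?_⟩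
  calc _ = ∑ j ∈ nodes, (∫ x, (p x).eval (j : ℝ) ∂μ) *
        (Lagrange.basis nodes Nat.cast j).eval t := heval _ t
    _ = ∫ x, ∑ j ∈ nodes, (p x).eval (j : ℝ) * (Lagrange.basis nodes Nat.cast j).eval t ∂μ := by
      rw [integral_finsetSum _ fun (j : ℕ) _ ↦ (hint j).mul_const _]
      simp only [integral_mul_const]
    _ = ∫ x, (p x).eval t ∂μ := by
      congr 1 with x
      rw [← heval, ← hinterp x]

section VolumeIntegral

variable {E : Type*} [NormedAddCommGroup E] [NormedSpace ℝ E] [FiniteDimensional ℝ E]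

theorem det_one_add_pos {A : E →L[ℝ] E} (hA : ‖A‖ < 1) : 0 < (1 + A).det := by
  have hdet : ∀ A ∈ ball (0 : E →L[ℝ] E) 1, (1 + A).det ≠ 0 := by
    intro A hA
    have := FiniteDimensional.complete ℝ E
    have hunit : IsUnit (1 + A) := by
      simpa using isUnit_one_sub_of_norm_lt_one (x := -A) (by simpa using hA)
    exact (LinearMap.isUnit_det _ (hunit.map ContinuousLinearMap.toLinearMapRingHom)).ne_zero
  have hcont : Continuous fun A : E →L[ℝ] E ↦ (1 + A).det :=
    ContinuousLinearMap.continuous_det.comp (by fun_prop)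
  by_contra! hneg
  obtain ⟨A₀, hA₀, hzero⟩ := (convex_ball (0 : E →L[ℝ] E) 1).isPreconnected.intermediate_value
    (mem_ball_zero_iff.2 hA) (mem_ball_self one_pos) hcont.continuousOn
    (show (0 : ℝ) ∈ Icc _ _ from ⟨hneg, by simp [ContinuousLinearMap.det]⟩)
  exact hdet A₀ hA₀ hzero

theorem exists_polynomial_eval_eq_integral_det_one_add_smul {Ω : Type*} [MeasurableSpace Ω]
    {μ : Measure Ω} {D : Ω → E →L[ℝ] E} (hint : ∀ t : ℝ, Integrable (fun x ↦ (1 + t • D x).det) μ) :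
    ∃ q : ℝ[X], ∀ t, q.eval t = ∫ x, (1 + t • D x).det ∂μ := by
  choose p hdeg hp using fun x ↦ exists_polynomial_eval_eq_det_one_add_smul (D x : E →ₗ[ℝ] E)
  have heval : ∀ x t, (p x).eval t = (1 + t • D x).det := hp
  simp only [← heval] at hint ⊢
  exact exists_polynomial_eval_eq_integral hdeg hint

variable [MeasurableSpace E] [BorelSpace E] (μ : Measure E) [μ.IsAddHaarMeasure]

theorem setIntegral_det_one_add_of_lipschitzWith {h : E → E} {h' : E → E →L[ℝ] E} {s : Set E}
    {K : ℝ≥0} (hs : MeasurableSet s) (hh : LipschitzWith K h) (hK : K < 1)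
    (hzero : ∀ x ∉ s, h x = 0) (hderiv : ∀ x ∈ s, HasFDerivAt h (h' x) x) :
    ∫ x in s, (1 + h' x).det ∂μ = μ.real s := by
  have := FiniteDimensional.complete ℝ E
  let g : E → E := fun x ↦ x + h x
  have hbij : Function.Bijective g := bijective_add_of_lipschitzWith hh hK
  have himage : g '' s = s :=
    image_eq_of_bijective_of_eqOn_compl hbij fun x hx ↦ by simp [g, hzero x hx]
  have hg : ∀ x ∈ s, HasFDerivWithinAt g (1 + h' x) s x := fun x hx ↦
    ((hasFDerivAt_id x).add (hderiv x hx)).hasFDerivWithinAt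
  have hpos : ∀ x ∈ s, 0 < (1 + h' x).det := fun x hx ↦
    det_one_add_pos (((hderiv x hx).le_of_lipschitz hh).trans_lt (by exact_mod_cast hK))
  calc ∫ x in s, (1 + h' x).det ∂μ = ∫ x in s, |(1 + h' x).det| • (1 : ℝ) ∂μ :=
        setIntegral_congr_fun hs fun x hx ↦ by simp [abs_of_pos (hpos x hx)]
    _ = ∫ _ in g '' s, (1 : ℝ) ∂μ :=
        (integral_image_eq_integral_abs_det_fderiv_smul μ hs hg hbij.injective.injOn
          fun _ ↦ (1 : ℝ)).symm
    _ = μ.real s := by rw [himage, setIntegral_const, smul_eq_mul, mul_one]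

theorem setIntegral_interior_det_one_add_of_lipschitzOnWith {h : E → E} {h' : E → E →L[ℝ] E}
    {s : Set E} {K : ℝ≥0} (hs : IsClosed s) (hh : LipschitzOnWith K h s) (hK : K < 1)
    (hzero : ∀ x ∈ frontier s, h x = 0) (hderiv : ∀ x ∈ interior s, HasFDerivAt h (h' x) x) :
    ∫ x in interior s, (1 + h' x).det ∂μ = μ.real (interior s) := by
  refine setIntegral_det_one_add_of_lipschitzWith μ isOpen_interior.measurableSet
    (lipschitzWith_indicator hs hh hzero) hK (fun x hx ↦ ?_) fun x hx ↦ ?_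
  · by_cases hxs : x ∈ s
    · rw [indicator_of_mem hxs, hzero x ⟨subset_closure hxs, hx⟩]
    · exact indicator_of_notMem hxs h
  · exact (hderiv x hx).congr_of_eventuallyEq
      (eqOn_indicator.eventuallyEq_of_mem (mem_interior_iff_mem_nhds.1 hx))

theorem setIntegral_det_fderiv_of_eqOn_frontier {r : E → E} {s : Set E} (hr : ContDiff ℝ 1 r)
    (hs : IsCompact s) (hconvex : Convex ℝ s) (hid : EqOn r id (frontier s)) :
    ∫ x in interior s, (fderiv ℝ r x).det ∂μ = μ.real (interior s) := by
  let h : E → E := fun x ↦ r x - x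
  let D : E → E →L[ℝ] E := fun x ↦ fderiv ℝ r x - 1
  have hh : ∀ x, HasFDerivAt h (D x) x := fun x ↦
    (hr.differentiable one_ne_zero x).hasFDerivAt.sub (hasFDerivAt_id x)
  have hD : Continuous D := (hr.continuous_fderiv one_ne_zero).sub continuous_const
  obtain ⟨K, hK⟩ : ∃ K : ℝ≥0, LipschitzOnWith K h s := by
    obtain ⟨K, hK⟩ := hs.exists_bound_of_continuousOn hD.continuousOn
    exact ⟨K.toNNReal, hconvex.lipschitzOnWith_of_nnnorm_hasFDerivWithin_le
      (fun x _ ↦ (hh x).hasFDerivWithinAt) fun x hx ↦ NNReal.le_toNNReal_of_coe_le (hK x hx)⟩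
  have hsmall : ∀ t : ℝ≥0, t * K < 1 →
      ∫ x in interior s, (1 + (t : ℝ) • D x).det ∂μ = μ.real (interior s) := fun t ht ↦
    setIntegral_interior_det_one_add_of_lipschitzOnWith μ (h := fun x ↦ (t : ℝ) • h x) hs.isClosed
      (by simpa [Function.comp_def] using (lipschitzWith_smul (t : ℝ)).comp_lipschitzOnWith hK) ht
      (fun x hx ↦ by simp [h, hid hx]) fun x _ ↦ (hh x).const_smul (t : ℝ)
  have hint : ∀ t : ℝ, IntegrableOn (fun x ↦ (1 + t • D x).det) (interior s) μ := fun t ↦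
    ((ContinuousLinearMap.continuous_det.comp (by fun_prop)).continuousOn.integrableOn_compact
      hs).mono_set interior_subset
  obtain ⟨q, hq⟩ := exists_polynomial_eval_eq_integral_det_one_add_smul hint
  have hconst : q = C (μ.real (interior s)) := by
    refine eq_of_infinite_eval_eq _ _ ((Ico_infinite (a := 0) (b := ((K : ℝ) + 1)⁻¹)
      (by positivity)).mono fun t ht ↦ ?_)
    lift t to ℝ≥0 using ht.1
    have htK : t * K < 1 := by
      have : (t : ℝ) * (K + 1) < 1 := (lt_div_iff₀ (by positivity)).1 (by simpa using ht.2)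
      exact_mod_cast (show (t : ℝ) * K < 1 by linarith [t.coe_nonneg])
    simpa [hq] using hsmall t htK
  simpa [hconst, D] using (hq 1).symm

end VolumeIntegral

section CoerciveField

variable {E : Type*} [NormedAddCommGroup E] [InnerProductSpace ℝ E] [FiniteDimensional ℝ E]

theorem det_eq_zero_of_hasFDerivAt_of_norm_eventuallyEq {r : E → E} {r' : E →L[ℝ] E} {x : E}
    {ρ : ℝ} (hρ : ρ ≠ 0) (hr : HasFDerivAt r r' x) (hnorm : ∀ᶠ y in 𝓝 x, ‖r y‖ = ρ) :
    r'.det = 0 := by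
  by_contra hdet
  obtain ⟨v, hv⟩ : ∃ v, r' v = r x :=
    (LinearMap.equivOfDetNeZero (r' : E →ₗ[ℝ] E) hdet).surjective (r x)
  have hconst : HasFDerivAt (fun y ↦ ‖r y‖ ^ 2) (0 : E →L[ℝ] ℝ) x :=
    (hasFDerivAt_const (ρ ^ 2) x).congr_of_eventuallyEq (hnorm.mono fun y hy ↦ congrArg (· ^ 2) hy)
  have hinner : 2 * inner ℝ (r x) (r' v) = 0 := by
    simpa using DFunLike.congr_fun (hr.norm_sq.unique hconst) v
  rw [hv, real_inner_self_eq_norm_sq, hnorm.self_of_nhds] at hinner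
  simp [hρ] at hinner

theorem exists_norm_ne_of_contDiff_of_eqOn_sphere {r : E → E} {ρ : ℝ} (hr : ContDiff ℝ 1 r)
    (hρ : 0 < ρ) (hid : EqOn r id (sphere 0 ρ)) : ∃ x ∈ ball 0 ρ, ‖r x‖ ≠ ρ := by
  by_contra! hnorm
  borelize E
  let μ : Measure E := volume
  have hdet : ∀ x ∈ ball 0 ρ, (fderiv ℝ r x).det = 0 := fun x hx ↦
    det_eq_zero_of_hasFDerivAt_of_norm_eventuallyEq hρ.ne'
      (hr.differentiable one_ne_zero x).hasFDerivAt
      (eventually_of_mem (isOpen_ball.mem_nhds hx) hnorm)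
  have hvolume := setIntegral_det_fderiv_of_eqOn_frontier μ hr (isCompact_closedBall 0 ρ)
    (convex_closedBall 0 ρ) (by rwa [frontier_closedBall _ hρ.ne'])
  rw [interior_closedBall _ hρ.ne', setIntegral_eq_zero_of_forall_eq_zero hdet] at hvolume
  exact (ENNReal.toReal_pos (measure_ball_pos μ 0 hρ).ne' measure_ball_lt_top.ne).ne hvolume

theorem exists_eq_zero_of_contDiff_of_eqOn_sphere {G : E → E} {ρ : ℝ} (hG : ContDiff ℝ 1 G)
    (hρ : 0 < ρ) (hid : EqOn G id (sphere 0 ρ)) : ∃ x, G x = 0 := by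
  by_contra! hne
  have hnorm : ∀ x, ‖G x‖ ≠ 0 := fun x ↦ norm_ne_zero_iff.2 (hne x)
  obtain ⟨x, -, hx⟩ := exists_norm_ne_of_contDiff_of_eqOn_sphere
    (r := fun x ↦ (ρ / ‖G x‖) • G x)
    ((contDiff_const.div (hG.norm ℝ hne) hnorm).smul hG) hρ fun x hx ↦ by
      simp [hid hx, mem_sphere_zero_iff_norm.1 hx, hρ.ne']
  exact hx <| by
    rw [norm_smul, norm_div, norm_norm, div_mul_cancel₀ _ (hnorm x), Real.norm_of_nonneg hρ.le]

theorem exists_eq_zero_of_eqOn_compl_ball {G : E → E} {ρ : ℝ} (hG : Continuous G)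
    (hρ : 0 < ρ) (hid : EqOn G id (ball 0 ρ)ᶜ) : ∃ x, G x = 0 := by
  by_contra! hne
  -- Approximating `G - id` rather than `G` preserves the boundary values: the approximation
  -- vanishes wherever `G - id` does.
  obtain ⟨D, hD, hclose, hsupport⟩ := (hG.sub continuous_id).exists_contDiff_approx 1 hG.norm
    fun x ↦ norm_pos_iff.2 (hne x)
  obtain ⟨x, hx⟩ := exists_eq_zero_of_contDiff_of_eqOn_sphere (G := fun x ↦ x + D x)
    (contDiff_id.add hD) hρ fun x hx ↦ by
      have hDx : D x = 0 := Function.notMem_support.1 fun hmem ↦ hsupport hmem <| by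
        simp [hid (x := x) (by simp [mem_sphere_zero_iff_norm.1 hx])]
      simp [hDx]
  have hdist : dist (D x) (G x - x) = ‖G x‖ := by
    rw [eq_neg_of_add_eq_zero_right hx, dist_eq_norm, ← norm_neg]
    congr 1
    abel
  exact (hclose x).ne hdist

theorem exists_eq_zero_of_eventually_inner_pos {F : E → E} (hF : Continuous F)
    (hpos : ∀ᶠ x in cocompact E, 0 < inner ℝ (F x) x) : ∃ x, F x = 0 := by
  obtain ⟨R, hR, hposR⟩ : ∃ R > 0, ∀ x, R ≤ ‖x‖ → 0 < inner ℝ (F x) x := by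
    rw [← cobounded_eq_cocompact, hasBasis_cobounded_norm.eventually_iff] at hpos
    obtain ⟨R, -, hR⟩ := hpos
    exact ⟨max R 1, by positivity, fun x hx ↦ hR ((le_max_left R 1).trans hx)⟩
  let χ : ContDiffBump (0 : E) := ⟨R, 2 * R, hR, by linarith⟩
  obtain ⟨x, hx⟩ := exists_eq_zero_of_eqOn_compl_ball
    (G := fun x ↦ χ x • F x + (1 - χ x) • x) (ρ := 2 * R)
    ((χ.continuous.smul hF).add ((continuous_const.sub χ.continuous).smul continuous_id))
    (by positivity) fun x hx ↦ by
      simp [χ.zero_of_le_dist (x := x) (by simpa [χ] using hx)]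
  rcases le_or_gt R ‖x‖ with hRx | hxR
  · have hinner : χ x * inner ℝ (F x) x + (1 - χ x) * ‖x‖ ^ 2 = 0 := by
      simpa [inner_add_left, real_inner_smul_left] using congrArg (inner ℝ · x) hx
    have hnorm : 0 < ‖x‖ ^ 2 := pow_pos (hR.trans_le hRx) 2
    have hcombo := convex_Ioi (0 : ℝ) (hposR x hRx) hnorm χ.nonneg (sub_nonneg.2 χ.le_one)
      (add_sub_cancel (χ x) 1)
    exact absurd hinner hcombo.ne'
  · have hχ : χ x = 1 := χ.one_of_mem_closedBall (by simpa using hxR.le)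
    exact ⟨x, by simpa [hχ] using hx⟩

end CoerciveField

section CoerciveFunctional

variable {V : Type*} [NormedAddCommGroup V] [NormedSpace ℝ V] [FiniteDimensional ℝ V]

theorem exists_eq_zero_of_eventually_apply_self_pos {A : V → StrongDual ℝ V} (hA : Continuous A)
    (hpos : ∀ᶠ u in cocompact V, 0 < A u u) : ∃ u, A u = 0 := by
  let e := toEuclidean (E := V)
  let riesz := InnerProductSpace.toDual ℝ (EuclideanSpace ℝ (Fin (Module.finrank ℝ V)))
  let F := fun x ↦ riesz.symm ((A (e.symm x)).comp (e.symm : _ →L[ℝ] V))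
  have hF : Continuous F := riesz.symm.continuous.comp (by fun_prop)
  have hinner : ∀ x y, inner ℝ (F x) y = A (e.symm x) (e.symm y) := fun x y ↦
    InnerProductSpace.toDual_symm_apply
  have hFpos : ∀ᶠ x in cocompact _, 0 < inner ℝ (F x) x := by
    simp only [hinner]
    exact e.symm.toHomeomorph.isClosedEmbedding.tendsto_cocompact.eventually hpos
  obtain ⟨x, hx⟩ := exists_eq_zero_of_eventually_inner_pos hF hFpos
  refine ⟨e.symm x, ContinuousLinearMap.ext fun v ↦ ?_⟩
  simpa [hx] using (hinner x (e v)).symm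

theorem eventually_cocompact_apply_lt_of_coercive {ι : Type*} {A : ι → V → StrongDual ℝ V}
    {k C : ℝ} (hk : 0 < k) (hA : ∀ i u, k * ‖u‖ ^ 2 - C ≤ A i u u) (f : StrongDual ℝ V) :
    ∀ᶠ u in cocompact V, ∀ i, f u < A i u u := by
  have hlarge : ∀ᶠ u : V in cocompact V, max 1 ((‖f‖ + |C|) / k) < ‖u‖ :=
    tendsto_norm_cocompact_atTop.eventually_gt_atTop _
  filter_upwards [hlarge] with u hu i
  obtain ⟨hone, hquot⟩ := max_lt_iff.1 hu
  rw [div_lt_iff₀ hk] at hquot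
  have hgrowth : (‖f‖ + |C|) * ‖u‖ < k * ‖u‖ ^ 2 := by nlinarith
  have hC : C ≤ |C| * ‖u‖ := (le_abs_self C).trans (le_mul_of_one_le_right (abs_nonneg C) hone.le)
  linarith [hA i u, (le_abs_self (f u)).trans (f.le_opNorm u)]

end CoerciveFunctional

theorem exists_subseq_tendsto_of_eventually_cocompact_ne {X Y : Type*}
    [TopologicalSpace X] [FirstCountableTopology X] [UniformSpace Y] [T2Space Y]
    {F : ℕ → X → Y} {G : X → Y} {y : Y} (hF : ∀ n, Continuous (F n))
    (hFG : TendstoLocallyUniformly F G atTop) (hne : ∀ᶠ x in cocompact X, ∀ n, F n x ≠ y)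
    {u : ℕ → X} (hu : ∀ n, F n (u n) = y) :
    ∃ φ : ℕ → ℕ, StrictMono φ ∧ ∃ x, Tendsto (u ∘ φ) atTop (𝓝 x) ∧ G x = y := by
  obtain ⟨K, hK, hKne⟩ := hasBasis_cocompact.eventually_iff.1 hne
  have huK : ∀ n, u n ∈ K := fun n ↦ by_contra fun hn ↦ hKne hn n (hu n)
  obtain ⟨x, -, φ, hφ, hlim⟩ := hK.tendsto_subseq huK
  have hsub : TendstoLocallyUniformly (F ∘ φ) G atTop := fun s hs x ↦
    (hFG s hs x).imp fun t ht ↦ ⟨ht.1, hφ.tendsto_atTop.eventually ht.2⟩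
  have hG : Continuous G := hFG.continuous (Frequently.of_forall hF)
  have hFlim := hsub.tendsto_comp hG.continuousAt hlim
  simp only [Function.comp_apply, hu] at hFlim
  exact ⟨φ, hφ, x, hlim, tendsto_nhds_unique hFlim tendsto_const_nhds⟩

theorem tendstoLocallyUniformly_finsetSum {α ι X Y : Type*} [TopologicalSpace X]
    [AddCommGroup Y] [UniformSpace Y] [IsUniformAddGroup Y] {F : ι → α → X → Y} {G : ι → X → Y}
    {l : Filter α} (s : Finset ι) (hFG : ∀ i ∈ s, TendstoLocallyUniformly (F i) (G i) l) :
    TendstoLocallyUniformly (fun a x ↦ ∑ i ∈ s, F i a x) (fun x ↦ ∑ i ∈ s, G i x) l := by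
  classical
  induction s using Finset.induction_on with
  | empty =>
    simpa using (tendsto_const_nhds (x := 0)).tendstoUniformly_const.tendstoLocallyUniformly
  | insert i s hi ih =>
    simp only [Finset.sum_insert hi]
    exact (hFG i (Finset.mem_insert_self i s)).add
      (ih fun j hj ↦ hFG j (Finset.mem_insert_of_mem hj))

section StressStrain

variable {ι V : Type*} {S T : ι → Type*} [Fintype ι]
  [NormedAddCommGroup V] [NormedSpace ℝ V] [FiniteDimensional ℝ V]
  [∀ e, NormedAddCommGroup (S e)] [∀ e, NormedSpace ℝ (S e)]
  [∀ e, NormedAddCommGroup (T e)] [∀ e, NormedSpace ℝ (T e)]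
  (w : ι → ℝ) (pairing : ∀ e, T e →ₗ[ℝ] S e →ₗ[ℝ] ℝ) (B : ∀ e, V →ₗ[ℝ] S e)

/-- The transpose `Bᵀ` of a strain map `B`, turning a stress in `T₀` into a force, encoded as a
functional on displacements. Stresses act on strains through `pairing`. -/
noncomputable def strainTranspose {S₀ T₀ : Type*} [AddCommGroup S₀] [Module ℝ S₀]
    [AddCommGroup T₀] [Module ℝ T₀] (pairing : T₀ →ₗ[ℝ] S₀ →ₗ[ℝ] ℝ) (B : V →ₗ[ℝ] S₀) :
    T₀ →ₗ[ℝ] StrongDual ℝ V :=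
  LinearMap.toContinuousLinearMap.toLinearMap ∘ₗ pairing.compl₂ B

/-- The internal force `w Bᵀ σ(B u)` of the displacement `u`, encoded as the functional sending a
virtual displacement to the virtual work done on it. -/
noncomputable def internalForce (σ : ∀ e, S e → T e) (u : V) : StrongDual ℝ V :=
  ∑ e, w e • strainTranspose (pairing e) (B e) (σ e (B e u))

variable {w pairing B}

theorem internalForce_apply (σ : ∀ e, S e → T e) (u v : V) :
    internalForce w pairing B σ u v = ∑ e, w e * pairing e (σ e (B e u)) (B e v) := by
  simp [internalForce, strainTranspose]

theorem le_internalForce_apply_self {σ : ∀ e, S e → T e} {energy : ∀ e, S e → ℝ} {a b c : ℝ}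
    (hw : ∀ e, 0 ≤ w e) (ha : 0 ≤ a)
    (hmat : ∀ e ε, a * energy e ε - b ≤ pairing e (σ e ε) ε) (hc : 0 < c)
    (hstruct : ∀ u, ‖u‖ ^ 2 ≤ c * ∑ e, w e * energy e (B e u)) (u : V) :
    a / c * ‖u‖ ^ 2 - b * ∑ e, w e ≤ internalForce w pairing B σ u u := by
  rw [internalForce_apply]
  calc a / c * ‖u‖ ^ 2 - b * ∑ e, w e
      ≤ a / c * (c * ∑ e, w e * energy e (B e u)) - b * ∑ e, w e := by gcongr; exact hstruct u
    _ = ∑ e, w e * (a * energy e (B e u) - b) := by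
      rw [← mul_assoc, div_mul_cancel₀ _ hc.ne', Finset.mul_sum, Finset.mul_sum,
        ← Finset.sum_sub_distrib]
      exact Finset.sum_congr rfl fun e _ ↦ by ring
    _ ≤ ∑ e, w e * pairing e (σ e (B e u)) (B e u) := by
      gcongr with e
      · exact hw e
      · exact hmat e _

variable [∀ e, FiniteDimensional ℝ (T e)]

theorem continuous_internalForce {σ : ∀ e, S e → T e} (hσ : ∀ e, Continuous (σ e)) :
    Continuous (internalForce w pairing B σ) := by
  refine continuous_finsetSum _ fun e _ ↦ ?_
  exact (w e • strainTranspose (pairing e) (B e)).continuous_of_finiteDimensional.comp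
    ((hσ e).comp (B e).continuous_of_finiteDimensional)

theorem tendstoLocallyUniformly_internalForce {α : Type*} {l : Filter α}
    {σh : α → ∀ e, S e → T e} {σ : ∀ e, S e → T e}
    (hσ : ∀ e, TendstoLocallyUniformly (fun h ↦ σh h e) (σ e) l) :
    TendstoLocallyUniformly (fun h ↦ internalForce w pairing B (σh h))
      (internalForce w pairing B σ) l := by
  refine tendstoLocallyUniformly_finsetSum _ fun e _ ↦ ?_
  let L := (w e • strainTranspose (pairing e) (B e)).toContinuousLinearMap
  exact L.uniformContinuous.comp_tendstoLocallyUniformly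
    ((hσ e).comp (B e) (B e).continuous_of_finiteDimensional)

theorem approximation_of_solutions_general [∀ e, FiniteDimensional ℝ (S e)]
    (hw : ∀ e, 0 ≤ w e) {energy : ∀ e, S e → ℝ} {σh : ℕ → ∀ e, S e → T e}
    (hσh : ∀ h e, Continuous (σh h e)) {σ : ∀ e, S e → T e} (f : V →ₗ[ℝ] ℝ) {a b : ℝ} (ha : 0 < a)
    (hmat : ∀ h e ε, a * energy e ε - b ≤ pairing e (σh h e ε) ε) {c : ℝ} (hc : 0 < c)
    (hstruct : ∀ u, ‖u‖ ^ 2 ≤ c * ∑ e, w e * energy e (B e u))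
    (hconv : ∀ e (K : Set (S e)), IsCompact K →
      TendstoUniformlyOn (fun h ↦ σh h e) (σ e) atTop K) :
    (∀ h, ∃ u, ∀ v, ∑ e, w e * pairing e (σh h e (B e u)) (B e v) = f v) ∧
      ∀ u : ℕ → V, (∀ h v, ∑ e, w e * pairing e (σh h e (B e (u h))) (B e v) = f v) →
        ∃ φ : ℕ → ℕ, StrictMono φ ∧ ∃ ustar, Tendsto (u ∘ φ) atTop (𝓝 ustar) ∧
          ∀ v, ∑ e, w e * pairing e (σ e (B e ustar)) (B e v) = f v := by
  let load : StrongDual ℝ V := f.toContinuousLinearMap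
  have weak_iff : ∀ (τ : ∀ e, S e → T e) (u : V), internalForce w pairing B τ u = load ↔
      ∀ v, ∑ e, w e * pairing e (τ e (B e u)) (B e v) = f v := fun τ u ↦ by
    simp [ContinuousLinearMap.ext_iff, internalForce_apply, load]
  have hcont := fun h ↦ continuous_internalForce (w := w) (pairing := pairing) (B := B) (hσh h)
  have hcoercive := eventually_cocompact_apply_lt_of_coercive (div_pos ha hc)
    (fun h ↦ le_internalForce_apply_self hw ha.le (hmat h) hc hstruct) load
  simp only [← weak_iff]
  refine ⟨fun h ↦ ?_, fun u hu ↦ ?_⟩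
  · obtain ⟨u, hu⟩ := exists_eq_zero_of_eventually_apply_self_pos
      ((hcont h).sub continuous_const) (hcoercive.mono fun u hu ↦ sub_pos.2 (hu h))
    exact ⟨u, sub_eq_zero.1 hu⟩
  · exact exists_subseq_tendsto_of_eventually_cocompact_ne hcont
      (tendstoLocallyUniformly_internalForce fun e ↦
        tendstoLocallyUniformly_iff_forall_isCompact.2 (hconv e))
      (hcoercive.mono fun u hu h heq ↦ (hu h).ne (by rw [heq])) hu

end StressStrain

theorem sq_norm_le_dotProduct_self {ν : Type*} [Fintype ν] (u : ν → ℝ) : ‖u‖ ^ 2 ≤ u ⬝ᵥ u := by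
  have hnonneg : 0 ≤ u ⬝ᵥ u := Finset.sum_nonneg fun i _ ↦ mul_self_nonneg (u i)
  refine (Real.le_sqrt (norm_nonneg u) hnonneg).1 ((pi_norm_le_iff_of_nonneg (by positivity)).2 ?_)
  intro i
  rw [Real.norm_eq_abs]
  refine Real.abs_le_sqrt ?_
  rw [sq]
  exact Finset.single_le_sum (f := fun i ↦ u i * u i) (fun j _ ↦ mul_self_nonneg (u j))
    (Finset.mem_univ i)

/-- **Approximation.** If the local material laws `σ̂_{e,h}` are continuous, uniformly
materially stable, converge to limiting laws `σ̂_e` uniformly on compact sets, and the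
structure is stable, then each approximating problem `w Bᵀ σ̂_h(B u) = f` (in weak form)
has a solution `u_h*`, and a subsequence of `(u_h*)` converges to a solution `u*` of the
limiting problem `w Bᵀ σ̂(B u) = f`.
The norm `‖·‖_e` on `ℝᵈ` is induced by the symmetric positive-definite matrix `𝔹 e`,
i.e. `‖x‖_e² = (𝔹 e) x ⬝ᵥ x`; norms on `ℝⁿ` are Euclidean. -/
theorem approximation_of_solutions (m d n : ℕ)
    (w : Fin m → ℝ) (hw : ∀ e, 0 < w e)
    (𝔹 : Fin m → Matrix (Fin d) (Fin d) ℝ) (h𝔹 : ∀ e, (𝔹 e).PosDef)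
    (σh : ℕ → Fin m → (Fin d → ℝ) → (Fin d → ℝ))
    (hσh : ∀ h e, Continuous (σh h e))
    (σ : Fin m → (Fin d → ℝ) → (Fin d → ℝ))
    (B : Fin m → (Fin n → ℝ) →ₗ[ℝ] (Fin d → ℝ))
    (f : Fin n → ℝ)
    (a b : ℝ) (ha : 0 < a) (hb : 0 ≤ b)
    (hmat : ∀ h e (ε : Fin d → ℝ),
      a * ((𝔹 e).mulVec ε ⬝ᵥ ε) - b ≤ σh h e ε ⬝ᵥ ε)
    (c : ℝ) (hc : 0 < c)
    (hstruct : ∀ u : Fin n → ℝ,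
      u ⬝ᵥ u ≤ c * ∑ e, w e * ((𝔹 e).mulVec (B e u) ⬝ᵥ (B e u)))
    (hconv : ∀ e (K : Set (Fin d → ℝ)), IsCompact K →
      TendstoUniformlyOn (fun h => σh h e) (σ e) atTop K) :
    ∃ u : ℕ → Fin n → ℝ,
      (∀ h, ∀ v : Fin n → ℝ,
        ∑ e, w e * (σh h e (B e (u h)) ⬝ᵥ (B e v)) = f ⬝ᵥ v) ∧
      ∃ φ : ℕ → ℕ, StrictMono φ ∧
        ∃ ustar : Fin n → ℝ,
          Tendsto (u ∘ φ) atTop (𝓝 ustar) ∧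
          ∀ v : Fin n → ℝ,
            ∑ e, w e * (σ e (B e ustar) ⬝ᵥ (B e v)) = f ⬝ᵥ v := by
  obtain ⟨hexists, hsubseq⟩ := approximation_of_solutions_general (fun e ↦ (hw e).le)
    (pairing := fun _ ↦ dotProductBilin ℝ ℝ) hσh (dotProductBilin ℝ ℝ f) ha hmat hc
    (fun u ↦ (sq_norm_le_dotProduct_self u).trans (hstruct u)) hconv
  choose u hu using hexists
  exact ⟨u, hu, hsubseq u hu⟩
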